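/- Saddle-point characterization of limit points (Theorem 4). Let X ⊆ ℝⁿ be nonempty closed convex, θ : ℝⁿ → ℝ and each component gᵢ : ℝⁿ → ℝ differentiable and convex, and α, β, σ > 0. Suppose (x̄, z̄, λ̄, μ̄) ∈ X × ℝᵐ × ℝᵐ₊ × ℝᵐ satisfies: (i) x̄ = P_X[x̄ − σ(∇θ(x̄) + Σᵢ λ̄ᵢ ∇gᵢ(x̄))]; (ii) z̄ = (λ̄ − μ̄)/α; (iii) λ̄ = [μ̄ + (1/β)(g(x̄) − z̄)]⁺ componentwise; (iv) μ̄ = λ̄. Then (x̄, z̄, λ̄, μ̄) is a saddle point of the proximal-perturbed Lagrangian L subject to X, i.e., L(x̄, z̄, λ, μ) ≤ L(x̄, z̄, λ̄, μ̄) ≤ L(x, z, λ̄, μ̄) for all (x, z, λ, μ) ∈ X × ℝᵐ × ℝᵐ × ℝᵐ with λ ∈ ℝᵐ₊. -/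

import Mathlib

open scoped InnerProductSpace
open Filter Topology

/-- The proximal-perturbed Lagrangian (P-Lagrangian)
`L(x, z, λ, μ) = θ(x) + ⟨λ, g(x) − z⟩ + ⟨μ, z⟩ + (α/2)‖z‖² − (β/2)‖λ − μ‖²`. -/
noncomputable def PLag {n m : ℕ} (θ : EuclideanSpace ℝ (Fin n) → ℝ)
    (g : EuclideanSpace ℝ (Fin n) → EuclideanSpace ℝ (Fin m)) (α β : ℝ)
    (x : EuclideanSpace ℝ (Fin n)) (z lam mu : EuclideanSpace ℝ (Fin m)) : ℝ :=
  θ x + ⟪lam, g x - z⟫_ℝ + ⟪mu, z⟫_ℝ + (α / 2) * ‖z‖ ^ 2 - (β / 2) * ‖lam - mu‖ ^ 2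

/-- `(x*, z*, λ*, μ*)` is a saddle point of the P-Lagrangian subject to `X`:
`x* ∈ X`, `λ* ∈ ℝᵐ₊`, and
`L(x*, z*, λ, μ) ≤ L(x*, z*, λ*, μ*) ≤ L(x, z, λ*, μ*)` for all
`(x, z, λ, μ) ∈ X × ℝᵐ × ℝᵐ₊ × ℝᵐ`. -/
def IsSaddlePt {n m : ℕ} (θ : EuclideanSpace ℝ (Fin n) → ℝ)
    (g : EuclideanSpace ℝ (Fin n) → EuclideanSpace ℝ (Fin m)) (α β : ℝ)
    (X : Set (EuclideanSpace ℝ (Fin n)))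
    (xs : EuclideanSpace ℝ (Fin n)) (zs ls ms : EuclideanSpace ℝ (Fin m)) : Prop :=
  xs ∈ X ∧ (∀ i, 0 ≤ ls i) ∧
    (∀ lam mu : EuclideanSpace ℝ (Fin m), (∀ i, 0 ≤ lam i) →
      PLag θ g α β xs zs lam mu ≤ PLag θ g α β xs zs ls ms) ∧
    (∀ x ∈ X, ∀ z : EuclideanSpace ℝ (Fin m),
      PLag θ g α β xs zs ls ms ≤ PLag θ g α β x z ls ms)

/-- `p` is the Euclidean (metric) projection of `u` onto `X`. -/
def IsProjOn {E : Type*} [NormedAddCommGroup E] (X : Set E) (u p : E) : Prop :=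
  p ∈ X ∧ ∀ y ∈ X, ‖u - p‖ ≤ ‖u - y‖

/-!
When the two multipliers agree, at `μ = λ`, the P-Lagrangian is the classical Lagrangian
`ℓ(x, λ) = θ(x) + ⟨λ, g(x)⟩` plus `(α/2)‖z‖²`; when `z = 0`, it is `ℓ(x, λ)` minus `(β/2)‖λ − μ‖²`.
Hence `(x̄, 0, λ̄, λ̄)` is a saddle point of the P-Lagrangian as soon as `(x̄, λ̄)` is one of `ℓ`.
The projected gradient fixed point is the variational inequality `⟨∇ₓℓ(x̄, λ̄), x − x̄⟩ ≥ 0` on `X`,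
which for the convex function `ℓ(·, λ̄)` means minimality at `x̄`. The multiplier update is
complementary slackness, which means that `λ̄` maximizes `ℓ(x̄, ·)` over the orthant.
-/

section FirstOrder

variable {E : Type*} [NormedAddCommGroup E] [InnerProductSpace ℝ E]

theorem IsProjOn.inner_nonpos {X : Set E} {u p y : E} (h : IsProjOn X u p) (hX : Convex ℝ X)
    (hy : y ∈ X) : ⟪u - p, y - p⟫_ℝ ≤ 0 := by
  have : Nonempty X := ⟨⟨p, h.1⟩⟩
  have hbdd : BddBelow (Set.range fun w : X => ‖u - w‖) :=
    ⟨0, Set.forall_mem_range.2 fun _ => norm_nonneg _⟩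
  have hdist : ‖u - p‖ = ⨅ w : X, ‖u - w‖ :=
    le_antisymm (le_ciInf fun w => h.2 w w.2) (ciInf_le hbdd ⟨p, h.1⟩)
  exact (norm_eq_iInf_iff_real_inner_le_zero hX h.1).1 hdist y hy

variable [CompleteSpace E] {f : E → ℝ} {s : Set E} {v x y : E}

theorem hasGradientWithinAt_gradient (hf : DifferentiableAt ℝ f x) :
    HasGradientWithinAt f (gradient f x) s x :=
  hf.hasFDerivAt.hasFDerivWithinAt.hasGradientWithinAt

theorem add_inner_sub_le_of_convexOn (hf : ConvexOn ℝ s f) (hv : HasGradientWithinAt f v s x)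
    (hx : x ∈ s) (hy : y ∈ s) : f x + ⟪v, y - x⟫_ℝ ≤ f y := by
  let line : ℝ →ᵃ[ℝ] E := AffineMap.lineMap x y
  have hline0 : line 0 = x := AffineMap.lineMap_apply_zero x y
  have hline1 : line 1 = y := AffineMap.lineMap_apply_one x y
  have hconv : ConvexOn ℝ (line ⁻¹' s) (f ∘ line) := hf.comp_affineMap line
  have hderiv : HasDerivWithinAt (f ∘ line) ⟪v, y - x⟫_ℝ (line ⁻¹' s) 0 :=
    HasFDerivWithinAt.comp_hasDerivWithinAt_of_eq 0 hv.hasFDerivWithinAt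
      AffineMap.hasDerivWithinAt_lineMap (Set.mapsTo_preimage line s) hline0.symm
  have hslope : ⟪v, y - x⟫_ℝ ≤ slope (f ∘ line) 0 1 :=
    hconv.le_slope_of_hasDerivWithinAt (by rwa [Set.mem_preimage, hline0])
      (by rwa [Set.mem_preimage, hline1]) one_pos hderiv
  rw [slope_def_field, Function.comp_apply, Function.comp_apply, hline0, hline1, sub_zero,
    div_one] at hslope
  linarith

theorem IsProjOn.isMinOn_of_gradient_step {σ : ℝ} (h : IsProjOn s (x - σ • v) x)
    (hf : ConvexOn ℝ s f) (hv : HasGradientWithinAt f v s x) (hσ : 0 < σ) : IsMinOn f s x := by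
  refine isMinOn_iff.2 fun y hy => ?_
  have hproj : ⟪x - σ • v - x, y - x⟫_ℝ ≤ 0 := h.inner_nonpos hf.1 hy
  rw [sub_sub_cancel_left, inner_neg_left, real_inner_smul_left, neg_nonpos] at hproj
  have hvar : 0 ≤ ⟪v, y - x⟫_ℝ := nonneg_of_mul_nonneg_right hproj hσ
  linarith [add_inner_sub_le_of_convexOn hf hv h.1 hy]

end FirstOrder

theorem eq_max_zero_add_mul_iff {R : Type*} [Ring R] [LinearOrder R] [IsStrictOrderedRing R]
    {a b c : R} (hc : 0 < c) : a = max 0 (a + c * b) ↔ 0 ≤ a ∧ b ≤ 0 ∧ a * b = 0 := by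
  constructor
  · intro h
    have ha : 0 ≤ a := h ▸ le_max_left _ _
    have hb : b ≤ 0 := by
      have hle : a + c * b ≤ a := (le_max_right _ _).trans_eq h.symm
      exact nonpos_of_mul_nonpos_right (add_le_iff_nonpos_right a |>.1 hle) hc
    refine ⟨ha, hb, ?_⟩
    rcases max_choice 0 (a + c * b) with hmax | hmax
    · rw [h.trans hmax, zero_mul]
    · have hcb : c * b = 0 := left_eq_add.1 (h.trans hmax)
      rw [(mul_eq_zero.1 hcb).resolve_left hc.ne', mul_zero]
  · rintro ⟨ha, hb, hab⟩
    rcases mul_eq_zero.1 hab with rfl | rfl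
    · rw [zero_add, max_eq_left (mul_nonpos_of_nonneg_of_nonpos hc.le hb)]
    · rw [mul_zero, add_zero, max_eq_right ha]

theorem convexOn_finset_sum {𝕜 E F ι : Type*} [Semiring 𝕜] [PartialOrder 𝕜] [AddCommMonoid E]
    [SMul 𝕜 E] [AddCommMonoid F] [PartialOrder F] [IsOrderedAddMonoid F] [Module 𝕜 F]
    {s : Set E} {t : Finset ι} {f : ι → E → F} (hs : Convex 𝕜 s)
    (hf : ∀ i ∈ t, ConvexOn 𝕜 s (f i)) : ConvexOn 𝕜 s (∑ i ∈ t, f i) :=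
  Finset.sum_induction f (ConvexOn 𝕜 s) (fun _ _ => ConvexOn.add) (convexOn_const 0 hs) hf

/-- The classical Lagrangian `ℓ(x, λ) = θ(x) + ⟨λ, g(x)⟩` of the problem of minimizing `θ` subject
to `g ≤ 0`. The multiplier comes first, so that `lagrangian θ g lam` is the function of `x`. -/
noncomputable def lagrangian {E F : Type*} [NormedAddCommGroup F] [InnerProductSpace ℝ F]
    (θ : E → ℝ) (g : E → F) (lam : F) (x : E) : ℝ :=
  θ x + ⟪lam, g x⟫_ℝ

section Lagrangian

variable {E ι : Type*} [Fintype ι] {θ : E → ℝ} {g : E → EuclideanSpace ℝ ι}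
  {lam : EuclideanSpace ℝ ι} {s : Set E} {x : E}

theorem lagrangian_eq_add_sum : lagrangian θ g lam x = θ x + ∑ i, lam i * g x i := by
  simp only [lagrangian, PiLp.inner_apply, Real.inner_apply]

theorem isMaxOn_lagrangian_of_complementary (hg : ∀ i, g x i ≤ 0)
    (hcompl : ∀ i, lam i * g x i = 0) :
    IsMaxOn (fun l => lagrangian θ g l x) {l | ∀ i, 0 ≤ l i} lam := by
  refine isMaxOn_iff.2 fun l hl => ?_
  simp only [lagrangian_eq_add_sum, hcompl, Finset.sum_const_zero]
  gcongr
  exact Finset.sum_nonpos fun i _ => mul_nonpos_of_nonneg_of_nonpos (hl i) (hg i)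

theorem convexOn_lagrangian [AddCommMonoid E] [Module ℝ E] (hθ : ConvexOn ℝ s θ)
    (hg : ∀ i, ConvexOn ℝ s fun y => g y i) (hlam : ∀ i, 0 ≤ lam i) :
    ConvexOn ℝ s (lagrangian θ g lam) := by
  have hsum : ConvexOn ℝ s (∑ i, fun y => lam i * g y i) :=
    convexOn_finset_sum hθ.1 fun i _ => (hg i).smul (hlam i)
  refine (hθ.add hsum).congr fun y _ => ?_
  rw [lagrangian_eq_add_sum, Pi.add_apply, Finset.sum_apply]

theorem hasGradientWithinAt_lagrangian [NormedAddCommGroup E] [InnerProductSpace ℝ E]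
    [CompleteSpace E] {θ' : E} {g' : ι → E} (hθ : HasGradientWithinAt θ θ' s x)
    (hg : ∀ i, HasGradientWithinAt (fun y => g y i) (g' i) s x) :
    HasGradientWithinAt (lagrangian θ g lam) (θ' + ∑ i, lam i • g' i) s x := by
  have hderiv := hθ.hasFDerivWithinAt.add
    (HasFDerivWithinAt.fun_sum (u := Finset.univ) fun i _ =>
      (hg i).hasFDerivWithinAt.const_mul (lam i))
  rw [hasGradientWithinAt_iff_hasFDerivWithinAt, map_add, map_sum]
  simp only [map_smul]
  exact hderiv.congr_of_eventuallyEq (.of_forall fun _ => lagrangian_eq_add_sum)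
    lagrangian_eq_add_sum

end Lagrangian

section PLagrangian

variable {n m : ℕ} {θ : EuclideanSpace ℝ (Fin n) → ℝ}
  {g : EuclideanSpace ℝ (Fin n) → EuclideanSpace ℝ (Fin m)} {α β : ℝ}

theorem pLag_self_multiplier (x : EuclideanSpace ℝ (Fin n)) (z lam : EuclideanSpace ℝ (Fin m)) :
    PLag θ g α β x z lam lam = lagrangian θ g lam x + α / 2 * ‖z‖ ^ 2 := by
  simp only [PLag, lagrangian, inner_sub_right, sub_self, norm_zero]
  ring

theorem pLag_zero (x : EuclideanSpace ℝ (Fin n)) (lam mu : EuclideanSpace ℝ (Fin m)) :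
    PLag θ g α β x 0 lam mu = lagrangian θ g lam x - β / 2 * ‖lam - mu‖ ^ 2 := by
  simp only [PLag, lagrangian, inner_zero_right, sub_zero, norm_zero]
  ring

theorem isSaddlePt_of_isMinOn_of_isMaxOn {X : Set (EuclideanSpace ℝ (Fin n))}
    {x : EuclideanSpace ℝ (Fin n)} {lam : EuclideanSpace ℝ (Fin m)} (hα : 0 ≤ α) (hβ : 0 ≤ β)
    (hx : x ∈ X) (hlam : ∀ i, 0 ≤ lam i) (hmin : IsMinOn (lagrangian θ g lam) X x)
    (hmax : IsMaxOn (fun l => lagrangian θ g l x) {l | ∀ i, 0 ≤ l i} lam) :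
    IsSaddlePt θ g α β X x 0 lam lam := by
  have hvalue : PLag θ g α β x 0 lam lam = lagrangian θ g lam x := by
    rw [pLag_zero, sub_self, norm_zero]
    ring
  refine ⟨hx, hlam, fun l mu hl => ?_, fun y hy z => ?_⟩
  · calc PLag θ g α β x 0 l mu
        = lagrangian θ g l x - β / 2 * ‖l - mu‖ ^ 2 := pLag_zero x l mu
      _ ≤ lagrangian θ g l x := sub_le_self _ (by positivity)
      _ ≤ lagrangian θ g lam x := isMaxOn_iff.1 hmax l hl
      _ = PLag θ g α β x 0 lam lam := hvalue.symm
  · calc PLag θ g α β x 0 lam lam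
        = lagrangian θ g lam x := hvalue
      _ ≤ lagrangian θ g lam y := isMinOn_iff.1 hmin y hy
      _ ≤ lagrangian θ g lam y + α / 2 * ‖z‖ ^ 2 := le_add_of_nonneg_right (by positivity)
      _ = PLag θ g α β y z lam lam := (pLag_self_multiplier y z lam).symm

theorem limit_point_is_saddle_general {X : Set (EuclideanSpace ℝ (Fin n))} {σ : ℝ}
    {xbar : EuclideanSpace ℝ (Fin n)} {zbar lbar mbar : EuclideanSpace ℝ (Fin m)}
    (hθd : DifferentiableAt ℝ θ xbar) (hθc : ConvexOn ℝ X θ)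
    (hgd : ∀ i, DifferentiableAt ℝ (fun x => g x i) xbar)
    (hgc : ∀ i, ConvexOn ℝ X fun x => g x i) (hα : 0 < α) (hβ : 0 < β) (hσ : 0 < σ)
    (hfix : IsProjOn X
      (xbar - σ • (gradient θ xbar + ∑ i, lbar i • gradient (fun y => g y i) xbar)) xbar)
    (hz : zbar = α⁻¹ • (lbar - mbar))
    (hl : ∀ i, lbar i = max 0 (mbar i + β⁻¹ * (g xbar i - zbar i))) (hm : mbar = lbar) :
    IsSaddlePt θ g α β X xbar zbar lbar mbar := by
  subst hm
  obtain rfl : zbar = 0 := by rw [hz, sub_self, smul_zero]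
  have hkkt (i : Fin m) : 0 ≤ mbar i ∧ g xbar i ≤ 0 ∧ mbar i * g xbar i = 0 :=
    (eq_max_zero_add_mul_iff (inv_pos.2 hβ)).1 <| by
      simpa only [PiLp.zero_apply, sub_zero] using hl i
  have hmin : IsMinOn (lagrangian θ g mbar) X xbar :=
    hfix.isMinOn_of_gradient_step (convexOn_lagrangian hθc hgc fun i => (hkkt i).1)
      (hasGradientWithinAt_lagrangian (hasGradientWithinAt_gradient hθd)
        fun i => hasGradientWithinAt_gradient (hgd i)) hσ
  exact isSaddlePt_of_isMinOn_of_isMaxOn hα.le hβ.le hfix.1 (fun i => (hkkt i).1) hmin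
    (isMaxOn_lagrangian_of_complementary (fun i => (hkkt i).2.1) fun i => (hkkt i).2.2)

end PLagrangian

/-- Theorem 4, saddle-point characterization of limit points. If
`(x̄, z̄, λ̄, μ̄)` satisfies the limiting forms of the algorithm's update rules:
(i) `x̄ = P_X[x̄ − σ(∇θ(x̄) + Σᵢ λ̄ᵢ∇gᵢ(x̄))]`, (ii) `z̄ = (λ̄ − μ̄)/α`,
(iii) `λ̄ = [μ̄ + (1/β)(g(x̄) − z̄)]⁺` componentwise, (iv) `μ̄ = λ̄`,
then it is a saddle point of the P-Lagrangian subject to `X`. -/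
theorem limit_point_is_saddle {n m : ℕ}
    (θ : EuclideanSpace ℝ (Fin n) → ℝ)
    (g : EuclideanSpace ℝ (Fin n) → EuclideanSpace ℝ (Fin m))
    (X : Set (EuclideanSpace ℝ (Fin n)))
    (hXne : X.Nonempty) (hXcl : IsClosed X) (hXcv : Convex ℝ X)
    (hθd : Differentiable ℝ θ) (hθc : ConvexOn ℝ Set.univ θ)
    (hgd : ∀ i, Differentiable ℝ (fun x => g x i))
    (hgc : ∀ i, ConvexOn ℝ Set.univ (fun x => g x i))
    (α β σ : ℝ) (hα : 0 < α) (hβ : 0 < β) (hσ : 0 < σ)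
    (xbar : EuclideanSpace ℝ (Fin n)) (zbar lbar mbar : EuclideanSpace ℝ (Fin m))
    (hxbar : xbar ∈ X) (hlbar : ∀ i, 0 ≤ lbar i)
    (hfix : IsProjOn X
      (xbar - σ • (gradient θ xbar + ∑ i, lbar i • gradient (fun y => g y i) xbar)) xbar)
    (hz : zbar = α⁻¹ • (lbar - mbar))
    (hl : ∀ i, lbar i = max 0 (mbar i + β⁻¹ * (g xbar i - zbar i)))
    (hm : mbar = lbar) :
    IsSaddlePt θ g α β X xbar zbar lbar mbar := by
  exact limit_point_is_saddle_general (hθd xbar) (hθc.subset X.subset_univ hXcv)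
    (fun i => hgd i xbar) (fun i => (hgc i).subset X.subset_univ hXcv) hα hβ hσ hfix hz hl hm
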